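/- Suppose Assumptions C1 and C2 hold. Then there exists a unique stationary process (Y_t)_{t∈ℤ} with values in E = {1,…,N} satisfying the recursion Y_t = K⁻_{Z_{t−1}}(ε_t | Y_{t−1}, …, Y_{t−q}) for all t ∈ ℤ, and the process ((Y_t, Z_t))_{t∈ℤ} is ergodic. -/

import Mathlib

open MeasureTheory Filter Topology ProbabilityTheory
open scoped ENNReal NNReal

noncomputable section

/-- Shift on the two-sided path space. -/
def pathShift {α : Type*} (x : ℤ → α) : ℤ → α := fun t => x (t + 1)

/-- The conditional quantile `K⁻(u) = inf{i : Σ_{j ≤ i} K(j) ≥ u}` associated with a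
probability vector `K` on `Fin (N+1)` (with the convention that it equals the last state
when the defining set is empty). -/
noncomputable def quantileCat {N : ℕ} (K : Fin (N + 1) → ℝ) (u : ℝ) : Fin (N + 1) := by
  classical
  exact
    if h : ∃ i : Fin (N + 1), u ≤ ∑ j ∈ Finset.univ.filter (· ≤ i), K j then
      (Finset.univ.filter fun i : Fin (N + 1) =>
          u ≤ ∑ j ∈ Finset.univ.filter (· ≤ i), K j).min'
        ⟨h.choose, by simpa using h.choose_spec⟩
    else Fin.last N

/-!
Driving the recursion by the random maps `W_t = K⁻_{Z_{t-1}}(ε_t | ·)` turns it into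
`Y_t = W_t(Y_{t-1}, …, Y_{t-q})`. If `ε_t ≤ η(Z_{t-1})` with `η(z) = min_y K_z(1|y) > 0`, where
the state `1` is `0 : Fin (N + 1)`, then `W_t` is constant, and after `q` consecutive constant maps
the recursion has forgotten its past. Since `ε_t` is uniform and independent of the past, such a run
of constant maps ending at a given time has positive probability; by ergodicity, almost surely there
are such runs arbitrarily far in the past.
Iterating the recursion from any initial path therefore stabilises at each time to the only
solution, which is a shift-equivariant measurable function of `(Z, ε)`; ergodicity passes to it.
-/

section PathSpace

variable {β γ Ω : Type*} [MeasurableSpace β] [MeasurableSpace γ] [MeasurableSpace Ω]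

lemma measurable_pathShift : Measurable (pathShift : (ℤ → β) → ℤ → β) :=
  measurable_pi_lambda _ fun t => measurable_pi_apply (t + 1)

lemma ergodic_pathShift_map_of_semiconj {P : Measure Ω} {X : Ω → ℤ → β} {Φ : (ℤ → β) → ℤ → γ}
    (hX : Measurable X) (hΦ : Measurable Φ) (herg : Ergodic pathShift (P.map X))
    (hshift : Function.Semiconj Φ pathShift pathShift) :
    Ergodic pathShift (P.map fun ω => Φ (X ω)) := by
  have hlaw : P.map (fun ω => Φ (X ω)) = (P.map X).map Φ := (Measure.map_map hΦ hX).symm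
  rw [hlaw]
  exact (hΦ.measurePreserving _).ergodic_of_ergodic_semiconj herg measurable_pathShift hshift

lemma ae_forall_exists_le_of_ergodic {μ : Measure (ℤ → β)} [IsFiniteMeasure μ]
    (hμ : Ergodic pathShift μ) {p : (ℤ → β) → ℤ → Prop}
    (hmeas : ∀ s, MeasurableSet {x | p x s}) (hshift : ∀ x s, p (pathShift x) s ↔ p x (s + 1))
    (hpos : ∀ s, μ {x | p x s} ≠ 0) :
    ∀ᵐ x ∂μ, ∀ m, ∃ s ≤ m, p x s := by
  refine ae_all_iff.2 fun m => ?_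
  set A : Set (ℤ → β) := {x | ∃ s ≤ m, p x s}
  have hA : MeasurableSet A := measurableSet_setOfPred.2 <| .exists fun s =>
    measurable_const.and (measurableSet_setOfPred.1 (hmeas s))
  have hsub : A ⊆ pathShift ⁻¹' A := by
    rintro x ⟨s, hs, hx⟩
    exact ⟨s - 1, by lia, (hshift x _).2 (by rwa [sub_add_cancel])⟩
  rcases hμ.ae_empty_or_univ_of_ae_le_preimage hA.nullMeasurableSet hsub.eventuallyLE with h | h
  · have hpA : {x | p x m} ⊆ A := fun x hx => ⟨m, le_rfl, hx⟩
    exact absurd (measure_mono_null hpA (ae_eq_empty.1 h)) (hpos m)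
  · exact eventuallyEq_univ.1 h

end PathSpace

section Recursion

variable {E : Type*} {q : ℕ}

/-- One application of the order-`q` recursion `y_t = w_t(y_{t-1}, …, y_{t-q})` to a whole path;
the solutions of the recursion driven by the maps `w` are the fixed points of `recursionStep w`. -/
def recursionStep (w : ℤ → (Fin q → E) → E) (y : ℤ → E) : ℤ → E :=
  fun t => w t fun i => y (t - 1 - (i : ℤ))

/-- The maps `w` coalesce at time `s` if the `q` maps at times `s - q + 1, …, s` are constant, so
that the values of a solution after time `s - q` do not depend on its earlier values. -/
def Coalesces (w : ℤ → (Fin q → E) → E) (s : ℤ) : Prop :=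
  ∀ t ∈ Set.Ioc (s - q) s, ∀ v v', w t v = w t v'

lemma Coalesces.iterate_recursionStep_eq {w : ℤ → (Fin q → E) → E} {s : ℤ} (h : Coalesces w s)
    (y y' : ℤ → E) {n : ℕ} {t : ℤ} (ht : t ∈ Set.Ioc (s - q) (s + n)) :
    (recursionStep w)^[n + 1] y t = (recursionStep w)^[n + 1] y' t := by
  induction n generalizing t with
  | zero => exact h t (by simpa using ht) _ _
  | succ n ih =>
    simp only [Set.mem_Ioc, Nat.cast_succ] at ht
    rw [Function.iterate_succ_apply', Function.iterate_succ_apply' (n := n + 1)]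
    rcases le_or_gt t s with hts | hst
    · exact h t ⟨ht.1, hts⟩ _ _
    · exact congrArg (w t) (funext fun i => ih ⟨by have := i.isLt; lia, by lia⟩)

lemma recursionStep_semiconj_pathShift (w : ℤ → (Fin q → E) → E) :
    Function.Semiconj pathShift (recursionStep w) (recursionStep (pathShift w)) := by
  intro y
  funext t
  refine congrArg (w (t + 1)) (funext fun i => congrArg y ?_)
  ring

lemma coalesces_pathShift (w : ℤ → (Fin q → E) → E) (s : ℤ) :
    Coalesces (pathShift w) s ↔ Coalesces w (s + 1) := by
  refine ⟨fun h t ht => ?_, fun h t ht => h (t + 1) ⟨by grind, by grind⟩⟩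
  simpa [pathShift] using h (t - 1) ⟨by grind, by grind⟩

variable [Nonempty E] [TopologicalSpace E]

/-- The limit of the iterates of the recursion driven by `w`, started from a constant path. Its
value at `t` is arbitrary when the iterates do not converge there. -/
def backwardLimit (w : ℤ → (Fin q → E) → E) : ℤ → E :=
  fun t => limUnder atTop fun n => (recursionStep w)^[n] (fun _ => Classical.arbitrary E) t

lemma Coalesces.backwardLimit_eq [T2Space E] {w : ℤ → (Fin q → E) → E} {s : ℤ}
    (h : Coalesces w s) (y : ℤ → E) {n : ℕ} {t : ℤ} (ht : t ∈ Set.Ioc (s - q) (s + n)) :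
    backwardLimit w t = (recursionStep w)^[n + 1] y t := by
  refine Tendsto.limUnder_eq (tendsto_const_nhds.congr' ?_)
  filter_upwards [eventually_ge_atTop (n + 1)] with m hm
  obtain ⟨k, rfl⟩ := Nat.exists_eq_add_of_le hm
  rw [Function.iterate_add_apply _ (n + 1) k]
  exact h.iterate_recursionStep_eq _ _ ht

lemma isFixedPt_backwardLimit [T2Space E] {w : ℤ → (Fin q → E) → E}
    (h : ∀ m, ∃ s ≤ m, Coalesces w s) :
    Function.IsFixedPt (recursionStep w) (backwardLimit w) := by
  funext t
  obtain ⟨s, hs, hcoal⟩ := h (t - 1)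
  obtain ⟨n, rfl⟩ := Int.exists_add_of_le (show s ≤ t by lia)
  let y : ℤ → E := fun _ => Classical.arbitrary E
  calc recursionStep w (backwardLimit w) (s + n)
      = recursionStep w ((recursionStep w)^[n + 1] y) (s + n) :=
        congrArg (w (s + n)) (funext fun i =>
          hcoal.backwardLimit_eq y ⟨by have := i.isLt; lia, by lia⟩)
    _ = (recursionStep w)^[n + 2] y (s + n) := by rw [Function.iterate_succ_apply' (n := n + 1)]
    _ = backwardLimit w (s + n) :=
        (hcoal.backwardLimit_eq y (n := n + 1) ⟨by lia, by lia⟩).symm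

lemma eq_backwardLimit_of_isFixedPt [T2Space E] {w : ℤ → (Fin q → E) → E} {y : ℤ → E}
    (h : ∀ m, ∃ s ≤ m, Coalesces w s) (hy : Function.IsFixedPt (recursionStep w) y) :
    y = backwardLimit w := by
  funext t
  obtain ⟨s, hs, hcoal⟩ := h (t - 1)
  obtain ⟨n, rfl⟩ := Int.exists_add_of_le (show s ≤ t by lia)
  rw [hcoal.backwardLimit_eq y ⟨by lia, le_rfl⟩, (hy.iterate (n + 1)).eq]

lemma backwardLimit_semiconj_pathShift :
    Function.Semiconj (backwardLimit : (ℤ → (Fin q → E) → E) → ℤ → E) pathShift pathShift := by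
  intro w
  funext t
  refine congrArg (limUnder atTop) (funext fun n => ?_)
  exact congrFun ((recursionStep_semiconj_pathShift w).iterate_right n
    fun _ => Classical.arbitrary E).symm t

end Recursion

section RecursionMeasurability

variable {E : Type*} {q : ℕ} [Countable E] [MeasurableSpace E] [MeasurableSingletonClass E]

lemma measurable_recursionStep :
    Measurable fun p : (ℤ → (Fin q → E) → E) × (ℤ → E) => recursionStep p.1 p.2 := by
  refine measurable_pi_lambda _ fun t => ?_
  have heval : Measurable fun p : ((Fin q → E) → E) × (Fin q → E) => p.1 p.2 :=
    measurable_from_prod_countable_left measurable_pi_apply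
  exact heval.comp (f := fun p : (ℤ → (Fin q → E) → E) × (ℤ → E) =>
    (p.1 t, fun i : Fin q => p.2 (t - 1 - (i : ℤ)))) (by fun_prop)

lemma measurable_iterate_recursionStep (y : ℤ → E) (n : ℕ) :
    Measurable fun w : ℤ → (Fin q → E) → E => (recursionStep w)^[n] y := by
  induction n with
  | zero => exact measurable_const
  | succ n ih =>
    simp only [Function.iterate_succ_apply']
    exact measurable_recursionStep.comp (measurable_id.prodMk ih)

lemma measurable_backwardLimit [Nonempty E] [TopologicalSpace E] [DiscreteTopology E]
    [BorelSpace E] :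
    Measurable (backwardLimit : (ℤ → (Fin q → E) → E) → ℤ → E) := by
  refine measurable_pi_lambda _ fun t => ?_
  exact (StronglyMeasurable.limUnder fun n => (measurable_pi_iff.1
    (measurable_iterate_recursionStep _ n) t).stronglyMeasurable).measurable

lemma measurableSet_coalesces (s : ℤ) :
    MeasurableSet {w : ℤ → (Fin q → E) → E | Coalesces w s} := by
  simp only [Coalesces, Set.ofPred_forall]
  exact .iInter fun t => .iInter fun _ => .iInter fun v => .iInter fun v' =>
    measurableSet_eq_fun (by fun_prop) (by fun_prop)

end RecursionMeasurability

section AdaptedThresholds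

variable {Ω : Type*} [MeasurableSpace Ω] {P : Measure Ω}

lemma measure_inter_setOf_le_ne_zero {m : MeasurableSpace Ω} {U H : Ω → ℝ}
    (hind : Indep (MeasurableSpace.comap U inferInstance) m P)
    (hU : ∀ c > 0, P (U ⁻¹' Set.Iic c) ≠ 0) (hH : Measurable[m] H) (hHpos : ∀ ω, 0 < H ω)
    {B : Set Ω} (hB : MeasurableSet[m] B) (hPB : P B ≠ 0) :
    P (B ∩ {ω | U ω ≤ H ω}) ≠ 0 := by
  -- On a non-null part of `B` the threshold `H` exceeds a constant, where independence applies.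
  have hcover : B ⊆ ⋃ n : ℕ, B ∩ {ω | 1 / ((n : ℝ) + 1) < H ω} := fun ω hω =>
    let ⟨n, hn⟩ := exists_nat_one_div_lt (hHpos ω)
    Set.mem_iUnion.2 ⟨n, hω, hn⟩
  obtain ⟨n, hn⟩ : ∃ n : ℕ, P (B ∩ {ω | 1 / ((n : ℝ) + 1) < H ω}) ≠ 0 := by
    by_contra! hnull
    exact hPB (measure_mono_null hcover (measure_iUnion_null hnull))
  set c : ℝ := 1 / ((n : ℝ) + 1)
  have hsub : U ⁻¹' Set.Iic c ∩ (B ∩ {ω | c < H ω}) ⊆ B ∩ {ω | U ω ≤ H ω} :=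
    fun ω ⟨hUc, hωB, hcH⟩ => ⟨hωB, show U ω ≤ H ω from le_trans hUc (le_of_lt hcH)⟩
  have hprod : P (U ⁻¹' Set.Iic c ∩ (B ∩ {ω | c < H ω}))
      = P (U ⁻¹' Set.Iic c) * P (B ∩ {ω | c < H ω}) :=
    (Indep_iff _ _ _).1 hind _ _ ⟨_, measurableSet_Iic, rfl⟩
      (hB.inter (measurableSet_lt measurable_const hH))
  refine fun hnull => mul_ne_zero (hU c (by positivity)) hn ?_
  rw [← hprod]
  exact measure_mono_null hsub hnull

lemma measure_forall_mem_Ioc_le_ne_zero [NeZero P] {ℱ : ℤ → MeasurableSpace Ω} (hℱ : Monotone ℱ)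
    {U H : ℤ → Ω → ℝ} (hU : ∀ t, Measurable[ℱ t] (U t)) (hH : ∀ t, Measurable[ℱ (t - 1)] (H t))
    (hind : ∀ t, Indep (MeasurableSpace.comap (U t) inferInstance) (ℱ (t - 1)) P)
    (hUpos : ∀ t, ∀ c > 0, P (U t ⁻¹' Set.Iic c) ≠ 0) (hHpos : ∀ t ω, 0 < H t ω)
    (r : ℤ) (n : ℕ) :
    P {ω | ∀ t ∈ Set.Ioc r (r + n), U t ω ≤ H t ω} ≠ 0 := by
  have hmeas (s : ℤ) : MeasurableSet[ℱ s] {ω | ∀ t ∈ Set.Ioc r s, U t ω ≤ H t ω} := by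
    simp only [Set.ofPred_forall]
    exact .iInter fun t => .iInter fun ht =>
      measurableSet_le ((hU t).mono (hℱ ht.2) le_rfl)
        ((hH t).mono (hℱ ((sub_one_lt t).le.trans ht.2)) le_rfl)
  induction n with
  | zero => simp [NeZero.ne P]
  | succ n ih =>
    have hstep := measure_inter_setOf_le_ne_zero (hind (r + n + 1)) (hUpos _) (hH _) (hHpos _)
      (by rw [add_sub_cancel_right]; exact hmeas (r + n)) ih
    refine fun hnull => hstep (measure_mono_null ?_ hnull)
    rintro ω ⟨hpast, hlast⟩ t ht
    rcases (show t ≤ r + n ∨ t = r + n + 1 by grind) with h | rfl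
    · exact hpast t ⟨ht.1, h⟩
    · exact hlast

lemma measure_preimage_Iic_ne_zero_of_uniform {U : Ω → ℝ} (hU : Measurable U)
    (hunif : P.map U = (volume : Measure ℝ).restrict (Set.Icc 0 1)) {c : ℝ} (hc : 0 < c) :
    P (U ⁻¹' Set.Iic c) ≠ 0 := by
  have hIcc : Set.Iic c ∩ Set.Icc 0 1 = Set.Icc 0 (min c 1) := by
    ext; simp only [Set.mem_inter_iff, Set.mem_Iic, Set.mem_Icc, le_min_iff]; tauto
  rw [← Measure.map_apply hU measurableSet_Iic, hunif, Measure.restrict_apply measurableSet_Iic,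
    hIcc, Real.volume_Icc]
  simpa using hc

end AdaptedThresholds

section Quantile

lemma quantileCat_le_iff {N : ℕ} (K : Fin (N + 1) → ℝ) (u : ℝ) (i : Fin (N + 1)) :
    quantileCat K u ≤ i ↔
      i = Fin.last N ∨ ∃ l ≤ i, u ≤ ∑ j ∈ Finset.univ.filter (· ≤ l), K j := by
  unfold quantileCat
  split_ifs with h
  · constructor
    · exact fun hle => .inr ⟨_, hle, (Finset.mem_filter.1 (Finset.min'_mem
        (Finset.univ.filter fun i => u ≤ ∑ j ∈ Finset.univ.filter (· ≤ i), K j) _)).2⟩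
    · rintro (rfl | ⟨l, hl, hul⟩)
      · exact Fin.le_last _
      · exact (Finset.min'_le _ l (Finset.mem_filter.2 ⟨Finset.mem_univ _, hul⟩)).trans hl
  · rw [Fin.last_le_iff]
    exact ⟨.inl, fun hi => hi.resolve_right fun ⟨l, _, hul⟩ => h ⟨l, hul⟩⟩

lemma quantileCat_eq_zero {N : ℕ} {K : Fin (N + 1) → ℝ} {u : ℝ} (h : u ≤ K 0) :
    quantileCat K u = 0 := by
  refine le_antisymm ((quantileCat_le_iff K u 0).2 (.inr ⟨0, le_rfl, ?_⟩)) (Fin.zero_le _)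
  simpa [Finset.filter_eq'] using h

lemma measurable_quantileCat {β : Type*} [MeasurableSpace β] {N : ℕ}
    {K : β → Fin (N + 1) → ℝ} {u : β → ℝ} (hK : ∀ i, Measurable fun b => K b i)
    (hu : Measurable u) : Measurable fun b => quantileCat (K b) (u b) := by
  refine measurable_of_Iic fun i => ?_
  have hcum (l : Fin (N + 1)) :
      Measurable fun b => u b ≤ ∑ j ∈ Finset.univ.filter (· ≤ l), K b j :=
    measurableSet_setOfPred.1 (measurableSet_le hu (Finset.measurable_sum _ fun j _ => hK j))
  simp only [Set.preimage, Set.mem_Iic, quantileCat_le_iff]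
  exact measurableSet_setOfPred.2
    (measurable_const.or (.exists fun l => measurable_const.and (hcum l)))

variable {α : Type*} {N q : ℕ}

/-- The maps `W_t = K⁻_{z_{t-1}}(u_t | ·)` driving the categorical recursion along a path of pairs
`x_t = (z_t, u_t)`. -/
def quantileMaps (K : α → (Fin q → Fin (N + 1)) → Fin (N + 1) → ℝ) (x : ℤ → α × ℝ) :
    ℤ → (Fin q → Fin (N + 1)) → Fin (N + 1) :=
  fun t v => quantileCat (K (x (t - 1)).1 v) (x t).2

lemma quantileMaps_semiconj_pathShift (K : α → (Fin q → Fin (N + 1)) → Fin (N + 1) → ℝ) :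
    Function.Semiconj (quantileMaps K) pathShift pathShift := by
  intro x
  funext t v
  simp only [quantileMaps, pathShift, sub_add_cancel, add_sub_cancel_right]

variable {K : α → (Fin q → Fin (N + 1)) → Fin (N + 1) → ℝ}

lemma coalesces_quantileMaps {x : ℤ → α × ℝ} {s : ℤ}
    (h : ∀ t ∈ Set.Ioc (s - q) s, (x t).2 ≤ ⨅ v, K (x (t - 1)).1 v 0) :
    Coalesces (quantileMaps K x) s := by
  have hzero : ∀ t ∈ Set.Ioc (s - q) s, ∀ v, quantileMaps K x t v = 0 := fun t ht v =>
    quantileCat_eq_zero ((h t ht).trans (ciInf_le (Set.finite_range _).bddBelow v))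
  exact fun t ht v v' => (hzero t ht v).trans (hzero t ht v').symm

variable [MeasurableSpace α]

lemma measurable_quantileMaps (hK : ∀ y i, Measurable fun z => K z y i) :
    Measurable (quantileMaps K) :=
  measurable_pi_lambda _ fun _ => measurable_pi_lambda _ fun v =>
    measurable_quantileCat (fun i => (hK v i).comp (by fun_prop)) (by fun_prop)

variable {Ω : Type*} [MeasurableSpace Ω] {P : Measure Ω} {Z : ℤ → Ω → α} {ε : ℤ → Ω → ℝ}

lemma measure_coalesces_quantileMaps_ne_zero [NeZero P] (hK : ∀ y, Measurable fun z => K z y 0)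
    (hKpos : ∀ z y, 0 < K z y 0) (hεpos : ∀ t, ∀ c > 0, P (ε t ⁻¹' Set.Iic c) ≠ 0)
    (hεindep : ∀ t : ℤ, Indep (MeasurableSpace.comap (ε t) inferInstance)
      (⨆ (s : ℤ) (_ : s ≤ t - 1),
        MeasurableSpace.comap (fun ω => (Z s ω, ε s ω)) inferInstance) P) (s : ℤ) :
    P {ω | Coalesces (quantileMaps K fun t => (Z t ω, ε t ω)) s} ≠ 0 := by
  let ℱ : ℤ → MeasurableSpace Ω := fun t => ⨆ (s : ℤ) (_ : s ≤ t),
    MeasurableSpace.comap (fun ω => (Z s ω, ε s ω)) inferInstance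
  have hℱ : Monotone ℱ := fun a b hab => biSup_mono fun s hs => hs.trans hab
  have hadapted (t : ℤ) : Measurable[ℱ t] fun ω => (Z t ω, ε t ω) :=
    Measurable.of_comap_le (le_iSup₂_of_le t le_rfl le_rfl)
  have hηpos (z : α) : 0 < ⨅ v, K z v 0 := by
    obtain ⟨v, hv⟩ := exists_eq_ciInf_of_finite (f := fun v => K z v 0)
    exact hv ▸ hKpos z v
  have hη : Measurable fun z => ⨅ v, K z v 0 := .iInf hK
  have hpos := measure_forall_mem_Ioc_le_ne_zero hℱ
    (fun t => measurable_snd.comp (hadapted t))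
    (fun t => hη.comp (measurable_fst.comp (hadapted (t - 1)))) hεindep hεpos
    (fun t ω => hηpos (Z (t - 1) ω)) (s - q) q
  rw [sub_add_cancel] at hpos
  exact fun hnull => hpos (measure_mono_null (fun ω hω => coalesces_quantileMaps hω) hnull)

lemma ae_forall_exists_le_coalesces_quantileMaps [IsProbabilityMeasure P]
    (hK : ∀ y i, Measurable fun z => K z y i) (hKpos : ∀ z y, 0 < K z y 0)
    (hZmeas : ∀ t, Measurable (Z t)) (hεmeas : ∀ t, Measurable (ε t))
    (hstat : Ergodic pathShift (P.map (fun ω (t : ℤ) => (Z t ω, ε t ω))))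
    (hεpos : ∀ t, ∀ c > 0, P (ε t ⁻¹' Set.Iic c) ≠ 0)
    (hεindep : ∀ t : ℤ, Indep (MeasurableSpace.comap (ε t) inferInstance)
      (⨆ (s : ℤ) (_ : s ≤ t - 1),
        MeasurableSpace.comap (fun ω => (Z s ω, ε s ω)) inferInstance) P) :
    ∀ᵐ ω ∂P, ∀ m, ∃ s ≤ m, Coalesces (quantileMaps K fun t => (Z t ω, ε t ω)) s := by
  have hX : Measurable fun ω (t : ℤ) => (Z t ω, ε t ω) := by fun_prop
  have hmeas (s : ℤ) : MeasurableSet {x : ℤ → α × ℝ | Coalesces (quantileMaps K x) s} :=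
    measurable_quantileMaps hK (measurableSet_coalesces s)
  refine ae_of_ae_map hX.aemeasurable (ae_forall_exists_le_of_ergodic hstat hmeas ?_ fun s => ?_)
  · intro x s
    rw [quantileMaps_semiconj_pathShift K x, coalesces_pathShift]
  · rw [Measure.map_apply hX (hmeas s)]
    exact measure_coalesces_quantileMaps_ne_zero (fun y => hK y 0) hKpos hεpos hεindep s

end Quantile

theorem categorical_time_series_solution_general
    {Ω α : Type*} {N q : ℕ} [MeasurableSpace Ω] [MeasurableSpace α]
    (P : Measure Ω) [IsProbabilityMeasure P]
    (K : α → (Fin q → Fin (N + 1)) → Fin (N + 1) → ℝ)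
    (hKmeas : ∀ y i, Measurable fun z => K z y i)
    (hKprob : ∀ z y, K z y ∈ stdSimplex ℝ (Fin (N + 1)))
    (hKpos : ∀ z y, 0 < K z y 0)
    (Z : ℤ → Ω → α) (ε : ℤ → Ω → ℝ)
    (hZmeas : ∀ t, Measurable (Z t)) (hεmeas : ∀ t, Measurable (ε t))
    (hstat : Ergodic pathShift (P.map (fun ω (t : ℤ) => (Z t ω, ε t ω))))
    (hεunif : ∀ t : ℤ, P.map (ε t) = (volume : Measure ℝ).restrict (Set.Icc 0 1))
    (hεindep : ∀ t : ℤ, Indep (MeasurableSpace.comap (ε t) inferInstance)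
      (⨆ (s : ℤ) (_ : s ≤ t - 1),
        MeasurableSpace.comap (fun ω => (Z s ω, ε s ω)) inferInstance) P) :
    ∃ Y : ℤ → Ω → Fin (N + 1),
      (∀ t, Measurable (Y t)) ∧
      (∀ t : ℤ, ∀ᵐ ω ∂P,
        Y t ω = quantileCat (K (Z (t - 1) ω) (fun i : Fin q => Y (t - 1 - (i : ℤ)) ω))
          (ε t ω)) ∧
      MeasurePreserving pathShift
        (P.map (fun ω (t : ℤ) => Y t ω)) (P.map (fun ω (t : ℤ) => Y t ω)) ∧
      Ergodic pathShift (P.map (fun ω (t : ℤ) => (Y t ω, Z t ω))) ∧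
      (∀ Y' : ℤ → Ω → Fin (N + 1),
        (∀ t : ℤ, ∀ᵐ ω ∂P,
          Y' t ω = quantileCat (K (Z (t - 1) ω) (fun i : Fin q => Y' (t - 1 - (i : ℤ)) ω))
            (ε t ω)) →
        ∀ t, Y' t =ᵐ[P] Y t) := by
  let X : Ω → ℤ → α × ℝ := fun ω t => (Z t ω, ε t ω)
  let Φ : (ℤ → α × ℝ) → ℤ → Fin (N + 1) := fun x => backwardLimit (quantileMaps K x)
  have hX : Measurable X := by fun_prop
  have hΦ : Measurable Φ := measurable_backwardLimit.comp (measurable_quantileMaps hKmeas)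
  have hΨ : Measurable fun (x : ℤ → α × ℝ) (t : ℤ) => (Φ x t, (x t).1) := by fun_prop
  have hshift : Function.Semiconj Φ pathShift pathShift :=
    backwardLimit_semiconj_pathShift.comp_left (quantileMaps_semiconj_pathShift K)
  have hcoal : ∀ᵐ ω ∂P, ∀ m, ∃ s ≤ m, Coalesces (quantileMaps K (X ω)) s :=
    ae_forall_exists_le_coalesces_quantileMaps hKmeas hKpos hZmeas hεmeas hstat
      (fun t _ => measure_preimage_Iic_ne_zero_of_uniform (hεmeas t) (hεunif t)) hεindep
  refine ⟨fun t ω => Φ (X ω) t, fun t => by fun_prop, fun t => ?_,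
    (ergodic_pathShift_map_of_semiconj hX hΦ hstat hshift).toMeasurePreserving,
    ergodic_pathShift_map_of_semiconj hX hΨ hstat fun x => ?_, fun Y' hY' t => ?_⟩
  · filter_upwards [hcoal] with ω hω
    exact (congrFun (isFixedPt_backwardLimit hω) t).symm
  · simp only [hshift x]
    rfl
  · filter_upwards [hcoal, ae_all_iff.2 hY'] with ω hω hsol
    exact congrFun (eq_backwardLimit_of_isFixedPt (y := fun t => Y' t ω) hω
      (funext fun t => (hsol t).symm)) t

/-- Proposition 4.6, part 1: under Assumptions C1–C2 there is a unique
stationary process `(Y_t)` with values in `E = {1, …, N}` satisfying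
`Y_t = K⁻_{Z_{t-1}}(ε_t | Y_{t-1}, …, Y_{t-q})`, and `((Y_t, Z_t))` is ergodic. -/
theorem categorical_time_series_solution
    {Ω : Type*} {N d q : ℕ} [m0 : MeasurableSpace Ω]
    (P : Measure Ω) [IsProbabilityMeasure P]
    (hq : 0 < q)
    (𝒵 : Set (Fin d → ℝ)) (h𝒵 : MeasurableSet 𝒵)
    (K : 𝒵 → (Fin q → Fin (N + 1)) → Fin (N + 1) → ℝ)
    (hKmeas : ∀ (y : Fin q → Fin (N + 1)) (i : Fin (N + 1)),
      Measurable fun z : 𝒵 => K z y i)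
    -- K_z(·|y) is a probability kernel
    (hKsum : ∀ (z : 𝒵) (y : Fin q → Fin (N + 1)), ∑ i, K z y i = 1)
    -- Assumption C1 : the kernels are uniformly bounded below on each z
    (hC1 : ∀ (z : 𝒵) (y : Fin q → Fin (N + 1)) (i : Fin (N + 1)), 0 < K z y i)
    -- Assumption C2 : ((Z_t, ε_t)) stationary ergodic, ε_t uniform on [0,1] and
    -- independent of ℱ_{t-1}
    (Z : ℤ → Ω → 𝒵) (ε : ℤ → Ω → ℝ)
    (hZmeas : ∀ t, Measurable (Z t)) (hεmeas : ∀ t, Measurable (ε t))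
    (hstat : Ergodic pathShift (P.map (fun ω (t : ℤ) => (Z t ω, ε t ω))))
    (hεunif : ∀ t : ℤ, P.map (ε t) = (volume : Measure ℝ).restrict (Set.Icc 0 1))
    (hεindep : ∀ t : ℤ, Indep (MeasurableSpace.comap (ε t) inferInstance)
      (⨆ (s : ℤ) (_ : s ≤ t - 1),
        MeasurableSpace.comap (fun ω => (Z s ω, ε s ω)) inferInstance) P) :
    ∃ Y : ℤ → Ω → Fin (N + 1),
      (∀ t, Measurable (Y t)) ∧
      -- Y solves the recursion Y_t = K⁻_{Z_{t-1}}(ε_t | Y_{t-1}, …, Y_{t-q})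
      (∀ t : ℤ, ∀ᵐ ω ∂P,
        Y t ω = quantileCat (K (Z (t - 1) ω) (fun i : Fin q => Y (t - 1 - (i : ℤ)) ω))
          (ε t ω)) ∧
      -- Y is stationary
      MeasurePreserving pathShift
        (P.map (fun ω (t : ℤ) => Y t ω)) (P.map (fun ω (t : ℤ) => Y t ω)) ∧
      -- the pair process ((Y_t, Z_t)) is ergodic
      Ergodic pathShift (P.map (fun ω (t : ℤ) => (Y t ω, Z t ω))) ∧
      -- uniqueness among stationary solutions
      (∀ Y' : ℤ → Ω → Fin (N + 1), (∀ t, Measurable (Y' t)) →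
        MeasurePreserving pathShift
          (P.map (fun ω (t : ℤ) => Y' t ω)) (P.map (fun ω (t : ℤ) => Y' t ω)) →
        (∀ t : ℤ, ∀ᵐ ω ∂P,
          Y' t ω = quantileCat (K (Z (t - 1) ω) (fun i : Fin q => Y' (t - 1 - (i : ℤ)) ω))
            (ε t ω)) →
        ∀ t, Y' t =ᵐ[P] Y t) := by
  obtain ⟨Y, hmeas, hsol, hstatY, herg, huniq⟩ :=
    categorical_time_series_solution_general P K hKmeas
      (fun z y => ⟨fun i => (hC1 z y i).le, hKsum z y⟩) (fun z y => hC1 z y 0)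
      Z ε hZmeas hεmeas hstat hεunif hεindep
  exact ⟨Y, hmeas, hsol, hstatY, herg, fun Y' _ _ => huniq Y'⟩

end
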